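/- Fix s > 5/2 and a Littlewood–Paley bump function with associated projectors P_{2^j}. Then there exist sequences (u_q)_{q≥0} and (E_q)_{q≥0} of smooth real-valued functions on 𝕋 (with the convention u_{−1} = 0) such that for all q ≥ 0: (1) u_q has zero mean, E_q is not identically zero, and 3(u_q²)' − u_q''' = E_q' pointwise on 𝕋; (2) ‖E_q‖_{Ḣ^{−s}} < 2^{−q}; (3) for every α < 0 and 1 ≤ p < 2 there exist constants C(α,p) > 0 and K(α,p) > 0, independent of q, such that ‖u_q − u_{q−1}‖_{Ḃ^α_{∞,∞}} + ‖u_q − u_{q−1}‖_{L^p} ≤ K(α,p)·2^{−C(α,p)q}; (4) there is a constant c > 0, independent of q, with ‖u_q − u_{q−1}‖_{L²} ≥ c; (5) for each q there exists a unique j ≥ 0 such that P_{2^j}(u_q − u_{q−1}) = u_q − u_{q−1}; (6) ∑_{n≠m} ‖(u_n − u_{n−1})(u_m − u_{m−1})‖_{Ḣ^{−s}} < ∞ and ∑_{n} ‖(u_n − u_{n−1})²‖_{Ḣ^{−s}} < ∞. -/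

import Mathlib

/-!
The increments are trigonometric polynomials, handled through their Fourier coefficients as
elements of `ℂ[T, T⁻¹]`. Write `e = 3u² - u''` for the primitive of the left-hand side of the
equation at the current approximation `u`; the error `E` is `e` plus a constant, which no
homogeneous norm sees and which can be chosen so that `E` does not vanish.

Adding an increment `d` changes `e` into `(3d² + e) + 6ud - d''`. Take
`d(x) = a(x) φ(σx) 2cos(2π·3·2^j x)`.

* Since `(2cos θ)² = 2 + 2cos 2θ`, and since `φ(σ·)²` is close to its mean in negative Sobolev
  norms when `σ` is large and `φ` has unit `L²` norm, `3d²` is close to `6a²`. The amplitude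
  `a = M - e / (12M)` with `M` a large constant makes `6a² + e` nearly constant
  (`Trig.exists_amplitude`).
* When `j` is large, every product of `d` with a fixed function is small in `Ḣ^{-s}`, and so is `d''`
  because `s > 2`; `d` itself is small in `Ḃ^α_{∞,∞}` for `α < 0`. The frequencies of `d` are within a
  bounded distance of `±3·2^j`, the interior of the plateau of a single Littlewood–Paley bump, and
  the other bumps vanish there because all bumps are nonnegative and sum to one.
* Normalized Riesz products provide profiles `φ ≥ 0` with unit `L²` norm and arbitrarily small `L¹`
  norm (`Trig.exists_peak`), so that interpolation makes `d` small in `L^p` for `p < 2`, whereas its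
  `L²` norm stays bounded below.

`Trig.exists_increment` combines these facts and `Trig.exists_sequence` iterates it. The Sobolev norm
is always bounded by the weighted `ℓ¹` norm of the Fourier coefficients, which is subadditive and
easy to compute on characters. The Besov and `L^p` bounds at step `n` hold for `α ≤ -1/(n+1)` and
`p ≤ 2 - 1/(n+1)`; a fixed pair `(α, p)` misses only finitely many steps, which the constant
`K(α, p)` absorbs.
-/

open MeasureTheory

/-- Fourier coefficient on `𝕋 = ℝ/ℤ`: `f̂(k) = ∫_0^1 f(x) e^{-2πikx} dx`. -/
noncomputable def fourierCoefT (f : ℝ → ℂ) (k : ℤ) : ℂ :=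
  ∫ x in (0:ℝ)..1, f x * Complex.exp (-(2 * Real.pi * Complex.I) * k * x)

/-- Littlewood–Paley shell projector `P_{2^j} f(x) = ∑_k f̂(k) φ_LP(2^{-j}k) e^{2πikx}`. -/
noncomputable def lpShell (φLP : ℝ → ℝ) (f : ℝ → ℂ) (j : ℕ) (x : ℝ) : ℂ :=
  ∑' k : ℤ, (φLP ((k : ℝ) / 2 ^ j) : ℂ) * fourierCoefT f k *
    Complex.exp ((2 * Real.pi * Complex.I) * k * x)

/-- Homogeneous negative Sobolev norm `‖f‖_{Ḣ^{-s}} = (∑_{k≠0} |k|^{-2s}|f̂(k)|²)^{1/2}`. -/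
noncomputable def negSobolevNorm (s : ℝ) (f : ℝ → ℝ) : ℝ :=
  Real.sqrt (∑' k : ℤ, if k = 0 then 0 else
    |(k : ℝ)| ^ (-(2 * s)) * ‖fourierCoefT (fun x => ((f x : ℝ) : ℂ)) k‖ ^ 2)

/-- The increment `u_q - u_{q-1}` with the convention `u_{-1} = 0`. -/
noncomputable def incr (u : ℕ → ℝ → ℝ) (q : ℕ) (x : ℝ) : ℝ :=
  u q x - (if q = 0 then 0 else u (q - 1) x)

open Filter Topology

/-- Trigonometric polynomials on `𝕋`, encoded by their finitely many Fourier coefficients; the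
product of Laurent polynomials is the convolution of coefficients. -/
abbrev Trig := LaurentPolynomial ℂ

namespace Trig

/-! ### Trigonometric polynomials -/

/-- The character `k ↦ e^{2πikx}` of `ℤ`. -/
noncomputable def chr (x : ℝ) : Multiplicative ℤ →* ℂ where
  toFun k := Complex.exp ((2 * Real.pi * Complex.I) * (k.toAdd : ℤ) * x)
  map_one' := by simp
  map_mul' a b := by
    rw [← Complex.exp_add]
    congr 1
    push_cast [toAdd_mul]
    ring

/-- Evaluation of a trigonometric polynomial at the point `x`. -/
noncomputable def ev (x : ℝ) : Trig →ₐ[ℂ] ℂ := AddMonoidAlgebra.lift ℂ ℂ ℤ (chr x)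

/-- The real part of the function represented by a trigonometric polynomial. -/
noncomputable def evR (f : Trig) (x : ℝ) : ℝ := (ev x f).re

/-- The function represented by `f` is real-valued. -/
def IsReal (f : Trig) : Prop := ∀ x : ℝ, ((evR f x : ℝ) : ℂ) = ev x f

/-- The weighted `ℓ¹` seminorm `∑ w(k)|f̂(k)|` of the Fourier coefficients. -/
noncomputable def wnorm (w : ℤ → ℝ) (f : Trig) : ℝ := f.coeff.sum fun k c => w k * ‖c‖

/-- The weight `|k|^{-t}`, set to zero at the zero mode. -/
noncomputable def wt (t : ℝ) (k : ℤ) : ℝ := if k = 0 then 0 else |(k : ℝ)| ^ (-t)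

/-- The `ℓ¹` norm of the Fourier coefficients (Wiener algebra norm). -/
noncomputable def wiener (f : Trig) : ℝ := wnorm (fun _ => 1) f

/-- The dilation `f ↦ f(σ ·)`. -/
noncomputable def dil (σ : ℤ) : Trig →ₐ[ℂ] Trig :=
  AddMonoidAlgebra.mapDomainAlgHom ℂ ℂ (AddMonoidHom.mulLeft σ)

/-- The second derivative, acting on Fourier coefficients. -/
noncomputable def dd (f : Trig) : Trig :=
  .ofCoeff (Finsupp.onFinset f.coeff.support (fun k => -(2 * Real.pi * k) ^ 2 * f.coeff k)
    (by intro k hk; simp only [Finsupp.mem_support_iff]; rintro h; simp [h] at hk))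

@[simp] lemma dd_coeff (f : Trig) (k : ℤ) :
    (dd f).coeff k = -(2 * Real.pi * k) ^ 2 * f.coeff k := rfl

lemma coeff_single' (k m : ℤ) (c : ℂ) :
    (AddMonoidAlgebra.single k c : Trig).coeff m = if k = m then c else 0 := by
  rw [AddMonoidAlgebra.coeff_single, Finsupp.single_apply]

lemma dd_add (f g : Trig) : dd (f + g) = dd f + dd g := by
  ext k; simp [mul_add]

lemma dd_single (k : ℤ) (c : ℂ) :
    dd (.single k c) = .single k (-(2 * Real.pi * k) ^ 2 * c) := by
  ext m
  rw [dd_coeff, coeff_single', coeff_single']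
  by_cases h : k = m
  · subst h; simp
  · simp [h]

lemma ev_single (x : ℝ) (k : ℤ) (c : ℂ) :
    ev x (.single k c) = c * Complex.exp ((2 * Real.pi * Complex.I) * k * x) := by
  rw [ev, AddMonoidAlgebra.lift_single]; simp [chr]

lemma dil_single (σ k : ℤ) (c : ℂ) : dil σ (.single k c) = .single (σ * k) c := by
  simp [dil, -LaurentPolynomial.single_eq_C_mul_T, AddMonoidAlgebra.mapDomain_single]

lemma ev_dil (σ : ℤ) (x : ℝ) (f : Trig) : ev x (dil σ f) = ev (σ * x) f := by
  induction f using AddMonoidAlgebra.induction_linear with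
  | zero => simp
  | add f g hf hg => simp [hf, hg]
  | single k c =>
    rw [dil_single, ev_single, ev_single]
    congr 2; push_cast; ring

lemma ev_contDiff (f : Trig) : ContDiff ℝ (⊤ : ℕ∞) (fun x => ev x f) := by
  induction f using AddMonoidAlgebra.induction_linear with
  | zero => simpa using contDiff_const
  | add f g hf hg => simpa using hf.add hg
  | single k c =>
    simp only [ev_single]
    exact contDiff_const.mul (Complex.contDiff_exp.comp (contDiff_const.mul Complex.ofRealCLM.contDiff)
      |>.of_le le_top)

lemma ev_continuous (f : Trig) : Continuous (fun x => ev x f) := (ev_contDiff f).continuous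

lemma evR_contDiff (f : Trig) : ContDiff ℝ (⊤ : ℕ∞) (evR f) :=
  Complex.reCLM.contDiff.comp (ev_contDiff f)

lemma evR_continuous (f : Trig) : Continuous (evR f) := (evR_contDiff f).continuous

lemma ev_periodic (f : Trig) (x : ℝ) : ev (x + 1) f = ev x f := by
  induction f using AddMonoidAlgebra.induction_linear with
  | zero => simp
  | add f g hf hg => simp [hf, hg]
  | single k c =>
    rw [ev_single, ev_single]
    congr 1
    rw [Complex.exp_eq_exp_iff_exists_int]
    exact ⟨k, by push_cast; ring⟩

lemma evR_periodic (f : Trig) : Function.Periodic (evR f) 1 := fun x => by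
  simp [evR, ev_periodic]

lemma integral_exp (m : ℤ) :
    ∫ x in (0:ℝ)..1, Complex.exp ((2 * Real.pi * Complex.I) * m * x) = if m = 0 then 1 else 0 := by
  split_ifs with h
  · simp [h]
  · have hc : (2 * Real.pi * Complex.I * m : ℂ) ≠ 0 := by
      simp [h, Real.pi_ne_zero]
    rw [integral_exp_mul_complex hc]
    have : Complex.exp (2 * Real.pi * Complex.I * m) = 1 := by
      rw [Complex.exp_eq_one_iff]; exact ⟨m, by ring⟩
    simp [this]

/-- Fourier coefficients of a trigonometric polynomial are its coefficients (orthogonality of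
characters). -/
lemma fourier_ev (f : Trig) (k : ℤ) : fourierCoefT (fun x => ev x f) k = f.coeff k := by
  unfold fourierCoefT
  have hi : ∀ f : Trig, IntervalIntegrable
      (fun x : ℝ => ev x f * Complex.exp (-(2 * Real.pi * Complex.I) * k * x)) volume 0 1 := by
    intro f
    apply Continuous.intervalIntegrable
    have := ev_continuous f
    fun_prop
  induction f using AddMonoidAlgebra.induction_linear with
  | zero => simp
  | add f g hf hg =>
    simp only [map_add, add_mul]
    rw [intervalIntegral.integral_add (hi f) (hi g), hf, hg]; simp
  | single m c =>
    simp only [ev_single, mul_assoc c]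
    rw [intervalIntegral.integral_const_mul]
    have : ∀ x : ℝ, Complex.exp ((2 * Real.pi * Complex.I) * m * x) *
        Complex.exp (-(2 * Real.pi * Complex.I) * k * x) =
        Complex.exp ((2 * Real.pi * Complex.I) * (m - k : ℤ) * x) := by
      intro x; rw [← Complex.exp_add]; congr 1; push_cast; ring
    simp only [this, integral_exp, sub_eq_zero]
    rw [coeff_single']; simp

lemma integral_ev (f : Trig) : ∫ x in (0:ℝ)..1, ev x f = f.coeff 0 := by
  have := fourier_ev f 0
  simpa [fourierCoefT] using this

lemma integral_evR (f : Trig) : ∫ x in (0:ℝ)..1, evR f x = (f.coeff 0).re := by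
  rw [← integral_ev f]
  have := Complex.reCLM.intervalIntegral_comp_comm
    ((ev_continuous f).intervalIntegrable (μ := volume) 0 1)
  simpa [evR] using this

/-! ### Real-valued trigonometric polynomials -/

lemma IsReal.add {f g : Trig} (hf : IsReal f) (hg : IsReal g) : IsReal (f + g) := fun x => by
  rw [map_add, ← hf x, ← hg x]; simp [evR]

lemma IsReal.mul {f g : Trig} (hf : IsReal f) (hg : IsReal g) : IsReal (f * g) := fun x => by
  simp only [evR]
  rw [map_mul, ← hf x, ← hg x, ← Complex.ofReal_mul, Complex.ofReal_re]

lemma isReal_const (r : ℝ) : IsReal (LaurentPolynomial.C (r : ℂ)) := fun x => by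
  simp only [evR]
  rw [← LaurentPolynomial.single_eq_C, ev_single]; simp

lemma IsReal.dil {f : Trig} (hf : IsReal f) (σ : ℤ) : IsReal (dil σ f) := fun x => by
  have := hf (σ * x)
  simp only [evR, ev_dil] at *
  exact this

lemma evR_add (f g : Trig) (x : ℝ) : evR (f + g) x = evR f x + evR g x := by simp [evR]

lemma evR_mul {f g : Trig} (hf : IsReal f) (hg : IsReal g) (x : ℝ) :
    evR (f * g) x = evR f x * evR g x := by
  simp only [evR]
  rw [map_mul, ← hf x, ← hg x, ← Complex.ofReal_mul, Complex.ofReal_re]; simp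

lemma evR_const (r x : ℝ) : evR (LaurentPolynomial.C (r : ℂ)) x = r := by
  simp only [evR]
  rw [← LaurentPolynomial.single_eq_C, ev_single]; simp

lemma le_top2 {n : ℕ} : (n : WithTop ℕ∞) ≤ ((⊤ : ℕ∞) : WithTop ℕ∞) :=
  WithTop.coe_le_coe.2 le_top

lemma ev_deriv2 (f : Trig) : iteratedDeriv 2 (fun x => ev x f) = fun x => ev x (dd f) := by
  induction f using AddMonoidAlgebra.induction_linear with
  | zero =>
    have : dd 0 = 0 := by ext; simp
    rw [this]; ext x; simp
  | add f g hf hg =>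
    ext x
    simp only [map_add, dd_add]
    have h := iteratedDeriv_add (n := 2) (x := x)
      ((ev_contDiff f).of_le le_top2).contDiffAt
      ((ev_contDiff g).of_le le_top2).contDiffAt
    rw [hf, hg] at h
    exact h
  | single k c =>
    have h1 : ∀ c : ℂ, deriv (fun x => ev x (.single k c)) =
        fun x => ev x (.single k (2 * Real.pi * Complex.I * k * c)) := by
      intro c
      ext x
      simp only [ev_single]
      have h : HasDerivAt (fun x : ℝ => c * Complex.exp ((2 * Real.pi * Complex.I) * k * x))
          (c * (Complex.exp ((2 * Real.pi * Complex.I) * k * x) *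
            ((2 * Real.pi * Complex.I) * k * 1))) x := by
        apply HasDerivAt.const_mul
        apply HasDerivAt.cexp
        apply HasDerivAt.const_mul
        exact Complex.ofRealCLM.hasDerivAt
      rw [h.deriv]; ring
    rw [iteratedDeriv_succ, iteratedDeriv_one, h1, h1, dd_single]
    have : 2 * Real.pi * Complex.I * k * (2 * Real.pi * Complex.I * k * c) =
      -(2 * Real.pi * k) ^ 2 * c := by
      linear_combination (4 * Real.pi ^ 2 * k ^ 2 * c) * Complex.I_sq
    rw [this]

lemma iteratedDeriv_evR (f : Trig) (n : ℕ) (x : ℝ) :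
    iteratedDeriv n (evR f) x = (iteratedDeriv n (fun x => ev x f) x).re := by
  have := ContinuousLinearMap.iteratedFDeriv_comp_left Complex.reCLM
    (f := fun x => ev x f) (x := x) (i := n) (n := (⊤ : ℕ∞)) (ev_contDiff f).contDiffAt
      le_top2
  simp only [iteratedDeriv_eq_iteratedFDeriv]
  have h2 : (evR f) = Complex.reCLM ∘ (fun x => ev x f) := rfl
  rw [h2, this]; rfl

lemma evR_deriv2 (f : Trig) : iteratedDeriv 2 (evR f) = evR (dd f) := by
  ext x; rw [iteratedDeriv_evR, ev_deriv2]; rfl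

lemma IsReal.dd {f : Trig} (hf : IsReal f) : IsReal (dd f) := by
  have him : ∀ x, (ev x f).im = 0 := fun x => by rw [← hf x]; simp
  intro x
  have := ContinuousLinearMap.iteratedFDeriv_comp_left Complex.imCLM
    (f := fun x => ev x f) (x := x) (i := 2) (n := (⊤ : ℕ∞)) (ev_contDiff f).contDiffAt
      le_top2
  have h2 : Complex.imCLM ∘ (fun x => ev x f) = fun _ => (0 : ℝ) := by
    ext y; exact him y
  have h3 : (iteratedDeriv 2 (fun x => ev x f) x).im = iteratedDeriv 2 (fun _ : ℝ => (0:ℝ)) x := by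
    simp only [iteratedDeriv_eq_iteratedFDeriv]
    rw [← h2, this]; rfl
  rw [ev_deriv2] at h3
  apply Complex.ext
  · simp [evR]
  · simp [h3]

end Trig

namespace Trig

/-! ### Weighted norms of Fourier coefficients -/

lemma wt_nonneg (t : ℝ) (k : ℤ) : 0 ≤ wt t k := by
  unfold wt; split_ifs
  · exact le_rfl
  · positivity

lemma wnorm_eq_sum (w : ℤ → ℝ) (f : Trig) {S : Finset ℤ} (hS : f.coeff.support ⊆ S) :
    wnorm w f = ∑ k ∈ S, w k * ‖f.coeff k‖ :=
  Finsupp.sum_of_support_subset _ hS _ (by simp)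

lemma wnorm_nonneg {w : ℤ → ℝ} (hw : ∀ k, 0 ≤ w k) (f : Trig) : 0 ≤ wnorm w f :=
  Finset.sum_nonneg fun k _ => mul_nonneg (hw k) (norm_nonneg _)

lemma wnorm_zero (w : ℤ → ℝ) : wnorm w 0 = 0 := by simp [wnorm]

lemma wnorm_single (w : ℤ → ℝ) (k : ℤ) (c : ℂ) : wnorm w (.single k c) = w k * ‖c‖ := by
  rw [wnorm, AddMonoidAlgebra.coeff_single, Finsupp.sum_single_index (by simp)]

lemma wnorm_add_le {w : ℤ → ℝ} (hw : ∀ k, 0 ≤ w k) (f g : Trig) :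
    wnorm w (f + g) ≤ wnorm w f + wnorm w g := by
  classical
  have h1 : (f + g).coeff.support ⊆ f.coeff.support ∪ g.coeff.support := Finsupp.support_add
  rw [wnorm_eq_sum w _ h1, wnorm_eq_sum w f Finset.subset_union_left,
    wnorm_eq_sum w g Finset.subset_union_right, ← Finset.sum_add_distrib]
  refine Finset.sum_le_sum fun k _ => ?_
  rw [← mul_add]
  exact mul_le_mul_of_nonneg_left (norm_add_le _ _) (hw k)

lemma wnorm_smul (w : ℤ → ℝ) (c : ℂ) (f : Trig) : wnorm w (c • f) = ‖c‖ * wnorm w f := by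
  have h1 : (c • f).coeff.support ⊆ f.coeff.support := Finsupp.support_smul
  rw [wnorm_eq_sum w _ h1, wnorm_eq_sum w f subset_rfl, Finset.mul_sum]
  refine Finset.sum_congr rfl fun k _ => ?_
  rw [AddMonoidAlgebra.coeff_smul_apply, smul_eq_mul, norm_mul]; ring

lemma wnorm_sub_le {w : ℤ → ℝ} (hw : ∀ k, 0 ≤ w k) (f g : Trig) :
    wnorm w (f - g) ≤ wnorm w f + wnorm w g := by
  have := wnorm_add_le hw f ((-1 : ℂ) • g)
  rw [wnorm_smul] at this
  simpa [sub_eq_add_neg] using this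

lemma ev_eq_sum (f : Trig) (x : ℝ) : ev x f = ∑ k ∈ f.coeff.support,
    f.coeff k * Complex.exp ((2 * Real.pi * Complex.I) * k * x) := by
  rw [ev, AddMonoidAlgebra.lift_apply]; simp [Finsupp.sum, chr]

lemma norm_ev_le (f : Trig) (x : ℝ) : ‖ev x f‖ ≤ wiener f := by
  rw [ev_eq_sum, wiener, wnorm_eq_sum _ f subset_rfl]
  refine (norm_sum_le _ _).trans (Finset.sum_le_sum fun k _ => ?_)
  have : (2 * Real.pi * Complex.I) * k * x = ((2 * Real.pi * k * x : ℝ) : ℂ) * Complex.I := by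
    push_cast; ring
  rw [norm_mul, this, Complex.norm_exp_ofReal_mul_I, mul_one, one_mul]

lemma wt_tendsto {t : ℝ} (ht : 0 < t) : Tendsto (wt t) cofinite (𝓝 0) := by
  have h1 : Tendsto (fun k : ℤ => |(k : ℝ)|) cofinite atTop := by
    have := tendsto_norm_cocompact_atTop (E := ℤ)
    rw [cocompact_eq_cofinite] at this
    exact this.congr fun k => by rw [Int.norm_eq_abs]
  have h2 := (tendsto_rpow_neg_atTop ht).comp h1
  refine h2.congr' ?_
  have : ∀ᶠ k : ℤ in cofinite, k ≠ 0 := eventually_cofinite_ne 0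
  filter_upwards [this] with k hk
  simp [wt, hk]

/-- Modulating a fixed function by a high frequency makes every negative Sobolev norm tend to `0`. -/
lemma wnorm_mod_tendsto {t : ℝ} (ht : 0 < t) (f : Trig) :
    Tendsto (fun n : ℤ => wnorm (wt t) (f * .single n 1)) cofinite (𝓝 0) := by
  induction f using AddMonoidAlgebra.induction_linear with
  | zero => simp [wnorm_zero]
  | add f g hf hg =>
    refine squeeze_zero (fun n => wnorm_nonneg (wt_nonneg t) _) (fun n => ?_)
      (by simpa using hf.add hg)
    rw [add_mul]
    exact wnorm_add_le (wt_nonneg t) _ _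
  | single k c =>
    simp only [AddMonoidAlgebra.single_mul_single, wnorm_single]
    have := ((wt_tendsto ht).comp (add_right_injective k).tendsto_cofinite).mul_const ‖c * 1‖
    simpa using this

lemma coeff_zero_mod (f : Trig) :
    ∀ᶠ n : ℤ in cofinite, (f * .single n 1).coeff 0 = 0 := by
  induction f using AddMonoidAlgebra.induction_linear with
  | zero => simp
  | add f g hf hg =>
    filter_upwards [hf, hg] with n h1 h2
    rw [add_mul, AddMonoidAlgebra.coeff_add, Finsupp.add_apply, h1, h2, add_zero]
  | single k c =>
    have : ∀ᶠ n : ℤ in cofinite, n ≠ -k := eventually_cofinite_ne _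
    filter_upwards [this] with n hn
    rw [AddMonoidAlgebra.single_mul_single, coeff_single', if_neg (by omega)]

lemma mul_single' (f : Trig) (n : ℤ) (c : ℂ) :
    f * .single n c = c • (f * .single n 1) := by
  rw [← mul_smul_comm, AddMonoidAlgebra.smul_single, smul_eq_mul, mul_one]

/-- The fluctuation of a rapidly dilated function around its mean is negligible in negative
Sobolev norms, even after multiplication by a fixed function. -/
lemma wnorm_dil_tendsto {t : ℝ} (ht : 0 < t) (f g : Trig) :
    Tendsto (fun σ : ℤ => wnorm (wt t) (f * (dil σ g - .single 0 (g.coeff 0)))) cofinite (𝓝 0) := by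
  induction g using AddMonoidAlgebra.induction_linear with
  | zero => simp [wnorm_zero, -LaurentPolynomial.single_eq_C_mul_T]
  | add g h hg hh =>
    refine squeeze_zero (fun n => wnorm_nonneg (wt_nonneg t) _) (fun n => ?_)
      (by simpa using hg.add hh)
    refine le_trans (le_of_eq ?_) (wnorm_add_le (wt_nonneg t) _ _)
    rw [← mul_add, map_add, AddMonoidAlgebra.coeff_add, Finsupp.add_apply,
      AddMonoidAlgebra.single_add]
    congr 2; abel
  | single k c =>
    by_cases hk : k = 0
    · subst hk
      simp only [dil_single, coeff_single', mul_zero, if_true, sub_self, wnorm_zero]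
      exact tendsto_const_nhds
    · simp only [dil_single, coeff_single', hk, if_false, AddMonoidAlgebra.single_zero, sub_zero]
      have hinj : Function.Injective (fun σ : ℤ => σ * k) := mul_left_injective₀ hk
      have := ((wnorm_mod_tendsto ht f).comp hinj.tendsto_cofinite).const_mul ‖c‖
      simp only [mul_zero] at this
      refine this.congr fun σ => ?_
      rw [mul_single' _ _ c, wnorm_smul]; rfl

lemma coeff_zero_dil (f g : Trig) : ∀ᶠ σ : ℤ in cofinite,
    (f * dil σ g).coeff 0 = f.coeff 0 * g.coeff 0 := by
  induction g using AddMonoidAlgebra.induction_linear with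
  | zero => simp
  | add g h hg hh =>
    filter_upwards [hg, hh] with n h1 h2
    rw [map_add, mul_add, AddMonoidAlgebra.coeff_add, AddMonoidAlgebra.coeff_add,
      Finsupp.add_apply, Finsupp.add_apply, h1, h2, mul_add]
  | single k c =>
    by_cases hk : k = 0
    · subst hk
      refine Filter.Eventually.of_forall fun σ => ?_
      rw [dil_single, mul_zero, LaurentPolynomial.single_eq_C, mul_comm,
        ← LaurentPolynomial.smul_eq_C_mul, AddMonoidAlgebra.coeff_smul_apply]
      simp [mul_comm]
    · have hinj : Function.Injective (fun σ : ℤ => σ * k) := mul_left_injective₀ hk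
      filter_upwards [hinj.tendsto_cofinite.eventually (coeff_zero_mod f)] with σ hσ
      rw [dil_single, mul_single', AddMonoidAlgebra.coeff_smul_apply, coeff_single', if_neg hk, hσ]
      simp

/-- Two differentiations cost two powers of the frequency. -/
lemma wnorm_dd_le (t : ℝ) (f : Trig) :
    wnorm (wt t) (dd f) ≤ (2 * Real.pi) ^ 2 * wnorm (wt (t - 2)) f := by
  have h1 : (dd f).coeff.support ⊆ f.coeff.support := by
    intro k hk
    simp only [Finsupp.mem_support_iff, dd_coeff] at hk ⊢
    exact right_ne_zero_of_mul hk
  rw [wnorm_eq_sum _ _ h1, wnorm_eq_sum _ f subset_rfl, Finset.mul_sum]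
  refine Finset.sum_le_sum fun k _ => le_of_eq ?_
  rw [dd_coeff, norm_mul]
  unfold wt
  split_ifs with hk
  · simp
  · have hk' : 0 < |(k : ℝ)| := by positivity
    have : |(k : ℝ)| ^ (-(t - 2)) = |(k : ℝ)| ^ (-t) * |(k : ℝ)| ^ 2 := by
      rw [← Real.rpow_natCast, ← Real.rpow_add hk']; congr 1; push_cast; ring
    rw [this, sq_abs]
    simp [abs_of_pos Real.pi_pos, mul_pow, sq_abs]
    ring

/-- The `ℓ²` norm is at most the `ℓ¹` norm. -/
lemma negSobolevNorm_le (s : ℝ) {f : Trig} (hf : IsReal f) :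
    negSobolevNorm s (evR f) ≤ wnorm (wt s) f := by
  unfold negSobolevNorm
  have h0 : (fun x => ((evR f x : ℝ) : ℂ)) = fun x => ev x f := funext hf
  rw [h0]
  simp only [fourier_ev]
  have h1 : ∀ k : ℤ, (if k = 0 then 0 else |(k : ℝ)| ^ (-(2 * s)) * ‖f.coeff k‖ ^ 2) =
      (wt s k * ‖f.coeff k‖) ^ 2 := by
    intro k
    unfold wt
    split_ifs with hk
    · simp
    · have hk' : 0 ≤ |(k : ℝ)| := by positivity
      rw [mul_pow, ← Real.rpow_natCast (|(k : ℝ)| ^ (-s)), ← Real.rpow_mul hk']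
      congr 2; push_cast; ring
  simp only [h1]
  rw [tsum_eq_sum (s := f.coeff.support) (by
    intro k hk; rw [Finsupp.notMem_support_iff.1 hk]; simp)]
  refine Real.sqrt_le_iff.2 ⟨wnorm_nonneg (wt_nonneg s) f, ?_⟩
  exact Finset.sum_sq_le_sq_sum_of_nonneg
    (fun k _ => mul_nonneg (wt_nonneg s k) (norm_nonneg _))

end Trig

namespace Trig

open LaurentPolynomial (C)

/-! ### Cosine carriers -/

lemma wnorm_C_mul (w : ℤ → ℝ) (c : ℂ) (f : Trig) : wnorm w (C c * f) = ‖c‖ * wnorm w f := by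
  rw [← LaurentPolynomial.smul_eq_C_mul, wnorm_smul]

lemma coeff_C_mul (c : ℂ) (f : Trig) (k : ℤ) : (C c * f).coeff k = c * f.coeff k := by
  rw [← LaurentPolynomial.smul_eq_C_mul, AddMonoidAlgebra.coeff_smul_apply, smul_eq_mul]

lemma wnorm_wt_C (t : ℝ) (c : ℂ) : wnorm (wt t) (C c) = 0 := by
  rw [← LaurentPolynomial.single_eq_C, wnorm_single]; simp [wt]

/-- The trigonometric polynomial `2 cos(2πnx)`. -/
noncomputable def cosp (n : ℤ) : Trig := .single n 1 + .single (-n) 1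

lemma ev_cosp (n : ℤ) (x : ℝ) : ev x (cosp n) = ((2 * Real.cos (2 * Real.pi * n * x) : ℝ) : ℂ) := by
  rw [cosp, map_add, ev_single, ev_single]
  push_cast
  rw [Complex.two_cos]
  congr 2
  · simp only [one_mul]; congr 1; ring
  · simp only [one_mul]; congr 1; ring

lemma isReal_cosp (n : ℤ) : IsReal (cosp n) := fun x => by
  simp only [evR]
  rw [ev_cosp, Complex.ofReal_re]

lemma cosp_mul_self (n : ℤ) : cosp n * cosp n = cosp (2 * n) + 2 := by
  have h2 : (2 : Trig) = .single 0 1 + .single 0 1 := by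
    rw [LaurentPolynomial.single_eq_C, map_one]; norm_num
  simp only [cosp, add_mul, mul_add, AddMonoidAlgebra.single_mul_single, h2, mul_one,
    add_neg_cancel, neg_add_cancel]
  rw [two_mul, neg_add]
  abel

lemma wnorm_cosp_tendsto {t : ℝ} (ht : 0 < t) (f : Trig) :
    Tendsto (fun n : ℤ => wnorm (wt t) (f * cosp n)) cofinite (𝓝 0) := by
  have h1 := wnorm_mod_tendsto ht f
  have h2 := h1.comp (neg_injective (G := ℤ)).tendsto_cofinite
  refine squeeze_zero (fun n => wnorm_nonneg (wt_nonneg t) _) (fun n => ?_)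
      (by simpa using h1.add h2)
  rw [cosp, mul_add]
  exact wnorm_add_le (wt_nonneg t) _ _

lemma coeff_zero_cosp (f : Trig) : ∀ᶠ n : ℤ in cofinite, (f * cosp n).coeff 0 = 0 := by
  have h1 := coeff_zero_mod f
  have h2 := (neg_injective (G := ℤ)).tendsto_cofinite.eventually h1
  filter_upwards [h1, h2] with n h1 h2
  rw [cosp, mul_add, AddMonoidAlgebra.coeff_add, Finsupp.add_apply, h1, h2, add_zero]

/-! ### Concentrated profiles -/

/-- Riesz products: nonnegative trigonometric polynomials of mean one with arbitrarily large
mean square. Each step multiplies by `1 + cos(2πσx)` with `σ` so large that the means of the product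
and of its square factor. -/
lemma exists_riesz (n : ℕ) : ∃ F : Trig, IsReal F ∧ (∀ x, 0 ≤ evR F x) ∧ F.coeff 0 = 1 ∧
    (F * F).coeff 0 = (3 / 2) ^ n := by
  induction n with
  | zero =>
    refine ⟨C ((1 : ℝ) : ℂ), isReal_const 1, fun x => by rw [evR_const]; norm_num, by simp, by simp⟩
  | succ n ih =>
    obtain ⟨F, hr, hp, h1, h2⟩ := ih
    set B : Trig := C ((1 : ℝ) : ℂ) + C ((1 / 2 : ℝ) : ℂ) * cosp 1 with hB
    have hBr : IsReal B := (isReal_const _).add ((isReal_const _).mul (isReal_cosp 1))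
    have hBp : ∀ x, 0 ≤ evR B x := by
      intro x
      rw [hB, evR_add, evR_mul (isReal_const _) (isReal_cosp 1), evR_const, evR_const, evR,
        ev_cosp, Complex.ofReal_re]
      have h : ∀ t : ℝ, 0 ≤ 1 + 1 / 2 * (2 * Real.cos t) := fun t => by
        linarith [Real.neg_one_le_cos t]
      exact h _
    have hc0 : ∀ n : ℤ, n ≠ 0 → (cosp n).coeff 0 = 0 := by
      intro n hn
      rw [cosp, AddMonoidAlgebra.coeff_add, Finsupp.add_apply, coeff_single', coeff_single',
        if_neg hn, if_neg (by omega), add_zero]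
    have hB1 : B.coeff 0 = 1 := by
      rw [hB, AddMonoidAlgebra.coeff_add, Finsupp.add_apply, coeff_C_mul, hc0 1 one_ne_zero]
      simp
    have hB2 : (B * B).coeff 0 = 3 / 2 := by
      have : B * B = C (3 / 2) + (C 1 * cosp 1 + C (1 / 4) * cosp 2) := by
        have e1 : C (1 / 2 : ℂ) * 2 = 1 := by
          rw [← map_ofNat (C : ℂ →+* Trig) 2, ← map_mul]; simp
        have e2 : C (1 / 2 : ℂ) * C (1 / 2 : ℂ) = C (1 / 4) := by
          rw [← map_mul]; norm_num
        have e3 : C (3 / 2 : ℂ) = 1 + C (1 / 2 : ℂ) := by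
          rw [← map_one (C : ℂ →+* Trig), ← map_add]; norm_num
        have e4 : cosp 1 * cosp 1 = cosp 2 + 2 := cosp_mul_self 1
        rw [hB, ← e2, e3]
        push_cast
        rw [map_one]
        linear_combination (C (1 / 2 : ℂ)) ^ 2 * e4 + (cosp 1 + C (1 / 2 : ℂ)) * e1
      rw [this, AddMonoidAlgebra.coeff_add, AddMonoidAlgebra.coeff_add, Finsupp.add_apply,
        Finsupp.add_apply, coeff_C_mul, coeff_C_mul, hc0 1 one_ne_zero, hc0 _ (by norm_num)]
      simp
    obtain ⟨σ, hσ1, hσ2⟩ := ((coeff_zero_dil F B).and (coeff_zero_dil (F * F) (B * B))).exists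
    refine ⟨F * dil σ B, hr.mul (hBr.dil σ), fun x => ?_, ?_, ?_⟩
    · rw [evR_mul hr (hBr.dil σ)]
      refine mul_nonneg (hp x) ?_
      have := hBp (σ * x)
      rwa [evR, ← ev_dil] at this
    · rw [hσ1, h1, hB1, one_mul]
    · have : F * dil σ B * (F * dil σ B) = F * F * dil σ (B * B) := by rw [map_mul]; ring
      rw [this, hσ2, h2, hB2, pow_succ]

/-- Nonnegative profiles with unit `L²` norm and arbitrarily small `L¹` norm: `L²`-normalized
Riesz products. -/
lemma exists_peak {η : ℝ} (hη : 0 < η) : ∃ φ : Trig, IsReal φ ∧ (∀ x, 0 ≤ evR φ x) ∧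
    (φ * φ).coeff 0 = 1 ∧ (φ.coeff 0).re ≤ η := by
  obtain ⟨n, hn⟩ := pow_unbounded_of_one_lt ((1 / η) ^ 2) (by norm_num : (1 : ℝ) < 3 / 2)
  obtain ⟨F, hr, hp, h1, h2⟩ := exists_riesz n
  set ρ : ℝ := (3 / 2) ^ n with hρ
  have hρ0 : 0 < ρ := by positivity
  set r : ℝ := 1 / Real.sqrt ρ with hrdef
  have hr0 : 0 ≤ r := by positivity
  have hrr : r * r * ρ = 1 := by
    rw [hrdef, div_mul_div_comm, Real.mul_self_sqrt hρ0.le]; field_simp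
  refine ⟨C (r : ℂ) * F, (isReal_const r).mul hr, fun x => ?_, ?_, ?_⟩
  · rw [evR_mul (isReal_const r) hr, evR_const]
    exact mul_nonneg hr0 (hp x)
  · have : C (r : ℂ) * F * (C (r : ℂ) * F) = C (r * r : ℂ) * (F * F) := by rw [map_mul]; ring
    rw [this, coeff_C_mul, h2]
    rw [hρ] at hrr
    have h := congrArg (fun z : ℝ => (z : ℂ)) hrr
    push_cast at h ⊢
    exact h
  · rw [coeff_C_mul, h1, mul_one, Complex.ofReal_re, hrdef]
    have : 1 / η ≤ Real.sqrt ρ := Real.le_sqrt_of_sq_le hn.le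
    rw [div_le_iff₀ (by positivity)]
    rw [div_le_iff₀ hη] at this
    linarith

/-! ### Littlewood–Paley shells -/

/-- The frequencies of `f` lie where the `j`-th Littlewood–Paley bump equals one. -/
def InShell (j : ℕ) (f : Trig) : Prop :=
  ∀ k : ℤ, f.coeff k ≠ 0 → (2 : ℝ) ^ j ≤ |(k : ℝ)| ∧ |(k : ℝ)| ≤ 12 / 7 * 2 ^ j

lemma lpShell_ev (φ : ℝ → ℝ) (f : Trig) (j : ℕ) (x : ℝ) :
    lpShell φ (fun y => ev y f) j x = ∑ k ∈ f.coeff.support, (φ ((k : ℝ) / 2 ^ j) : ℂ) *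
      f.coeff k * Complex.exp ((2 * Real.pi * Complex.I) * k * x) := by
  unfold lpShell
  simp only [fourier_ev]
  exact tsum_eq_sum fun k hk => by rw [Finsupp.notMem_support_iff.1 hk]; simp

lemma bump_eq_one {φ : ℝ → ℝ} (hone : ∀ ξ : ℝ, 1 ≤ |ξ| → |ξ| ≤ 12/7 → φ ξ = 1)
    {j : ℕ} {k : ℝ} (h1 : (2 : ℝ) ^ j ≤ |k|) (h2 : |k| ≤ 12 / 7 * 2 ^ j) : φ (k / 2 ^ j) = 1 := by
  have hj : (0 : ℝ) < 2 ^ j := by positivity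
  apply hone
  · rw [abs_div, abs_of_pos hj, le_div_iff₀ hj]; linarith
  · rw [abs_div, abs_of_pos hj, div_le_iff₀ hj]; linarith

lemma lpShell_self {φ : ℝ → ℝ} (hone : ∀ ξ : ℝ, 1 ≤ |ξ| → |ξ| ≤ 12/7 → φ ξ = 1)
    {j : ℕ} {f : Trig} (hf : InShell j f) (x : ℝ) :
    lpShell φ (fun y => ev y f) j x = ev x f := by
  rw [lpShell_ev, ev_eq_sum]
  refine Finset.sum_congr rfl fun k hk => ?_
  obtain ⟨h1, h2⟩ := hf k (Finsupp.mem_support_iff.1 hk)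
  rw [bump_eq_one hone h1 h2]; simp

/-- All other shells vanish, because the bumps are nonnegative and sum to one. -/
lemma lpShell_other {φ : ℝ → ℝ} (hone : ∀ ξ : ℝ, 1 ≤ |ξ| → |ξ| ≤ 12/7 → φ ξ = 1)
    (hrange : ∀ ξ : ℝ, φ ξ ∈ Set.Icc (0:ℝ) 1)
    (hsum : ∀ ξ : ℝ, 1 ≤ |ξ| → HasSum (fun j : ℕ => φ (ξ / 2 ^ j)) 1)
    {j j' : ℕ} (hj : j' ≠ j) {f : Trig} (hf : InShell j f) (x : ℝ) :
    lpShell φ (fun y => ev y f) j' x = 0 := by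
  rw [lpShell_ev]
  refine Finset.sum_eq_zero fun k hk => ?_
  obtain ⟨h1, h2⟩ := hf k (Finsupp.mem_support_iff.1 hk)
  have h3 : (1 : ℝ) ≤ |(k : ℝ)| := (one_le_pow₀ (by norm_num)).trans h1
  have h4 := sum_le_hasSum {j, j'} (fun i _ => (hrange _).1) (hsum k h3)
  rw [Finset.sum_pair hj.symm, bump_eq_one hone h1 h2] at h4
  have h5 : φ ((k : ℝ) / 2 ^ j') = 0 := le_antisymm (by linarith) (hrange _).1
  rw [h5]; simp

/-- Frequencies of `g(x) 2cos(2π·3·2^j x)` cluster around `±3·2^j = ±(3/2)·2^{j+1}`, in the interior of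
the plateau of the bump of index `j + 1`. -/
lemma eventually_inShell (g : Trig) :
    ∀ᶠ j : ℕ in atTop, InShell (j + 1) (g * cosp (3 * 2 ^ j)) := by
  obtain ⟨D, hD⟩ : ∃ D : ℝ, ∀ m ∈ g.coeff.support, |(m : ℝ)| ≤ D := by
    obtain ⟨D, hD⟩ := (g.coeff.support.image fun m : ℤ => |(m : ℝ)|).exists_le
    exact ⟨D, fun m hm => hD _ (Finset.mem_image_of_mem _ hm)⟩
  have : ∀ᶠ j : ℕ in atTop, 3 * D ≤ (2 : ℝ) ^ j :=
    (tendsto_pow_atTop_atTop_of_one_lt (by norm_num : (1 : ℝ) < 2)).eventually_ge_atTop _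
  filter_upwards [this] with j hj k hk
  have hsh : ∀ n : ℤ, (g * .single n 1).coeff k = g.coeff (k - n) := by
    intro n
    rw [AddMonoidAlgebra.coeff_mul_single_apply, mul_one, sub_eq_add_neg]
  rw [cosp, mul_add, AddMonoidAlgebra.coeff_add, Finsupp.add_apply, hsh, hsh] at hk
  have h2 : (0 : ℝ) < 2 ^ j := by positivity
  have key : ∀ m : ℤ, g.coeff m ≠ 0 → -D ≤ (m : ℝ) ∧ (m : ℝ) ≤ D := fun m hm =>
    abs_le.1 (hD m (Finsupp.mem_support_iff.2 hm))
  rw [pow_succ]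
  by_cases h : g.coeff (k - 3 * 2 ^ j) = 0
  · have h' : g.coeff (k - -(3 * 2 ^ j)) ≠ 0 := fun h' => hk (by rw [h, h', add_zero])
    obtain ⟨h3, h4⟩ := key _ h'
    push_cast at h3 h4
    rw [abs_of_nonpos (by linarith)]
    constructor <;> linarith
  · obtain ⟨h3, h4⟩ := key _ h
    push_cast at h3 h4
    rw [abs_of_nonneg (by linarith)]
    constructor <;> linarith

end Trig

namespace Trig

open LaurentPolynomial (C)

/-! ### The increment -/

/-- An approximate square root of `-e/6` modulo constants: for a large constant `M`, the function
`a = M - e / (12 M)` satisfies `6a² + e = 6M² + e² / (24 M²)`, and the constant `6M²` is invisible to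
the homogeneous norm. Unlike an exact square root of `M² - e/6`, it is a trigonometric polynomial. -/
lemma exists_amplitude (t : ℝ) {e : Trig} (he : IsReal e) {δ : ℝ} (hδ : 0 < δ) :
    ∃ a : Trig, IsReal a ∧ wnorm (wt t) (6 * (a * a) + e) ≤ δ ∧ 1 ≤ ((a * a).coeff 0).re := by
  set P : ℝ := wnorm (wt t) (e * e) with hP
  have hP0 : 0 ≤ P := wnorm_nonneg (wt_nonneg t) _
  -- `P / δ` makes the remainder small; the two mean terms give `a` mean square at least one.
  set M : ℝ := 1 + P / δ + ‖e.coeff 0‖ + ‖(e * e).coeff 0‖ with hM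
  have hM1 : 1 ≤ M := by
    have : 0 ≤ P / δ := by positivity
    have := norm_nonneg (e.coeff 0)
    have := norm_nonneg ((e * e).coeff 0)
    linarith
  have hM0 : M ≠ 0 := by positivity
  set i : ℝ := -(1 / (12 * M)) with hi
  have hiM : M * i = -(1 / 12) := by rw [hi]; field_simp
  have hCi : 12 * (C (M : ℂ) * C (i : ℂ)) = (-1 : Trig) := by
    rw [← map_mul, ← Complex.ofReal_mul, hiM, ← map_ofNat (C : ℂ →+* Trig) 12, ← map_mul,
      ← map_one (C : ℂ →+* Trig), ← map_neg]
    congr 1; push_cast; norm_num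
  have hi2 : i ^ 2 ≤ 1 / (144 * M) := by
    have : i ^ 2 = 1 / (144 * (M * M)) := by rw [hi]; field_simp; norm_num
    rw [this]
    apply one_div_le_one_div_of_le (by positivity)
    nlinarith
  refine ⟨C (M : ℂ) + C (i : ℂ) * e, (isReal_const M).add ((isReal_const i).mul he), ?_, ?_⟩
  · have h1 : 6 * ((C (M : ℂ) + C (i : ℂ) * e) * (C (M : ℂ) + C (i : ℂ) * e)) + e =
        C (6 * M ^ 2 : ℂ) + C (6 * i ^ 2 : ℂ) * (e * e) := by
      simp only [map_mul, map_pow, map_ofNat]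
      linear_combination e * hCi
    rw [h1]
    refine (wnorm_add_le (wt_nonneg t) _ _).trans ?_
    rw [wnorm_wt_C, wnorm_C_mul, zero_add, ← hP]
    have h2 : ‖(6 * i ^ 2 : ℂ)‖ = 6 * i ^ 2 := by simp
    rw [h2]
    have h3 : P ≤ M * δ := by
      have : P / δ ≤ M := by
        have := norm_nonneg (e.coeff 0)
        have := norm_nonneg ((e * e).coeff 0)
        linarith
      rwa [div_le_iff₀ hδ] at this
    calc 6 * i ^ 2 * P ≤ 6 * (1 / (144 * M)) * (M * δ) := by gcongr
      _ = δ / 24 := by field_simp; norm_num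
      _ ≤ δ := by linarith
  · have h1 : (C (M : ℂ) + C (i : ℂ) * e) * (C (M : ℂ) + C (i : ℂ) * e) =
        C ((M ^ 2 : ℝ) : ℂ) + (C (((2 * (M * i)) : ℝ) : ℂ) * e + C ((i ^ 2 : ℝ) : ℂ) * (e * e)) := by
      push_cast
      simp only [map_mul, map_pow, map_ofNat]
      ring
    rw [h1, AddMonoidAlgebra.coeff_add, AddMonoidAlgebra.coeff_add, Finsupp.add_apply,
      Finsupp.add_apply, coeff_C_mul, coeff_C_mul, LaurentPolynomial.C_apply, if_pos rfl,
      Complex.add_re, Complex.add_re, Complex.re_ofReal_mul, Complex.re_ofReal_mul,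
      Complex.ofReal_re, hiM]
    have h3 := (abs_le.1 (Complex.abs_re_le_norm (e.coeff 0)))
    have h4 := (abs_le.1 (Complex.abs_re_le_norm ((e * e).coeff 0)))
    have h5 := norm_nonneg (e.coeff 0)
    have h6 := norm_nonneg ((e * e).coeff 0)
    have h7 : i ^ 2 ≤ 1 := hi2.trans (by rw [div_le_one (by positivity)]; linarith)
    have h8 : -‖(e * e).coeff 0‖ ≤ i ^ 2 * ((e * e).coeff 0).re := by
      nlinarith [sq_nonneg i]
    have h9 : 0 ≤ P / δ := by positivity
    nlinarith

/-- Elementary interpolation of `y^p` between `y` and `y²`. -/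
lemma rpow_le_interp {y R p p₀ : ℝ} (hy : 0 ≤ y) (hR : 1 ≤ R) (hp : 1 ≤ p) (hpp : p ≤ p₀)
    (hp₀ : p₀ ≤ 2) : y ^ p ≤ R * y + R ^ (p₀ - 2) * y ^ 2 := by
  have hR0 : 0 < R := by linarith
  rcases le_total y R with h | h
  · have h1 : y ^ p ≤ R * y := by
      rcases hy.eq_or_lt with rfl | hy0
      · rw [Real.zero_rpow (by linarith)]; simp
      · have : y ^ p = y ^ (p - 1) * y := by
          rw [← Real.rpow_add_one hy0.ne']; congr 1; ring
        rw [this]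
        refine mul_le_mul_of_nonneg_right ?_ hy
        calc y ^ (p - 1) ≤ R ^ (p - 1) := Real.rpow_le_rpow hy h (by linarith)
          _ ≤ R ^ (1 : ℝ) := Real.rpow_le_rpow_of_exponent_le hR (by linarith)
          _ = R := Real.rpow_one R
    have : 0 ≤ R ^ (p₀ - 2) * y ^ 2 := by positivity
    linarith
  · have hy0 : 0 < y := by linarith
    have h1 : y ^ p ≤ R ^ (p₀ - 2) * y ^ 2 := by
      have : y ^ p = y ^ (p - 2) * y ^ 2 := by
        rw [← Real.rpow_natCast, ← Real.rpow_add hy0]; congr 1; push_cast; ring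
      rw [this]
      refine mul_le_mul_of_nonneg_right ?_ (sq_nonneg _)
      calc y ^ (p - 2) ≤ R ^ (p - 2) := Real.rpow_le_rpow_of_nonpos hR0 h (by linarith)
        _ ≤ R ^ (p₀ - 2) := Real.rpow_le_rpow_of_exponent_le hR (by linarith)
    have : 0 ≤ R * y := by positivity
    linarith

/-- A modulated dilated profile is small in `L^p`, uniformly in the dilation, in the modulation
and in `p ≤ p₀ < 2`: by interpolation its `p`-th moment is controlled by the arbitrarily small `L¹`
norm and the unit `L²` norm of `φ`. The dilations considered are those that preserve both means. -/
lemma exists_profile {a : Trig} (ha : IsReal a) {ε p₀ : ℝ} (hε : 0 < ε) (hp₀ : p₀ < 2) :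
    ∃ φ : Trig, IsReal φ ∧ (φ * φ).coeff 0 = 1 ∧ ∀ σ : ℤ, (dil σ φ).coeff 0 = φ.coeff 0 →
      (dil σ (φ * φ)).coeff 0 = 1 → ∀ n : ℤ, ∀ p : ℝ, 1 ≤ p → p ≤ p₀ →
      ∫ x in (0:ℝ)..1, |evR (a * dil σ φ * cosp n) x| ^ p ≤ ε := by
  set B : ℝ := 2 * wiener a + 1 with hB
  have hw0 : 0 ≤ wiener a := wnorm_nonneg (fun _ => zero_le_one) a
  have hB1 : 1 ≤ B := by linarith
  have hB0 : 0 < B := by linarith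
  obtain ⟨R, hR1, hR⟩ : ∃ R : ℝ, 1 ≤ R ∧ R ^ (p₀ - 2) ≤ ε / (2 * B ^ 2) := by
    have h := tendsto_rpow_neg_atTop (y := 2 - p₀) (by linarith)
    have h2 := (h.eventually_le_const (u := ε / (2 * B ^ 2)) (by positivity)).and
      (eventually_ge_atTop 1)
    obtain ⟨R, h3, h4⟩ := h2.exists
    exact ⟨R, h4, by rwa [neg_sub] at h3⟩
  have hR0 : 0 < R := by linarith
  obtain ⟨φ, hφ, hφp, hφ2, hφ1⟩ := exists_peak (η := ε / (2 * B ^ 2 * R)) (by positivity)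
  refine ⟨φ, hφ, hφ2, fun σ hσ1 hσ2 n p hp hpp => ?_⟩
  have hΦ := hφ.dil σ
  have hΦ0 : ∀ x, 0 ≤ evR (dil σ φ) x := fun x => by
    have := hφp (σ * x)
    rwa [evR, ← ev_dil] at this
  have hpt : ∀ x, |evR (a * dil σ φ * cosp n) x| ≤ B * evR (dil σ φ) x := by
    intro x
    rw [evR_mul (ha.mul hΦ) (isReal_cosp n), evR_mul ha hΦ, abs_mul, abs_mul, abs_of_nonneg (hΦ0 x)]
    have h1 : |evR a x| ≤ wiener a := (Complex.abs_re_le_norm _).trans (norm_ev_le a x)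
    have h2 : |evR (cosp n) x| ≤ 2 := by
      rw [evR, ev_cosp, Complex.ofReal_re, abs_mul, abs_two]
      linarith [Real.abs_cos_le_one (2 * Real.pi * n * x)]
    calc |evR a x| * evR (dil σ φ) x * |evR (cosp n) x|
        ≤ wiener a * evR (dil σ φ) x * 2 := by
          have := hΦ0 x
          gcongr
      _ ≤ B * evR (dil σ φ) x := by nlinarith [hΦ0 x]
  have hpt2 : ∀ x, |evR (a * dil σ φ * cosp n) x| ^ p ≤
      B ^ 2 * R * evR (dil σ φ) x + B ^ 2 * R ^ (p₀ - 2) * evR (dil σ (φ * φ)) x := by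
    intro x
    have h1 : evR (dil σ (φ * φ)) x = evR (dil σ φ) x ^ 2 := by
      rw [map_mul, evR_mul hΦ hΦ, sq]
    rw [h1]
    calc |evR (a * dil σ φ * cosp n) x| ^ p ≤ (B * evR (dil σ φ) x) ^ p :=
          Real.rpow_le_rpow (abs_nonneg _) (hpt x) (by linarith)
      _ = B ^ p * evR (dil σ φ) x ^ p := Real.mul_rpow hB0.le (hΦ0 x)
      _ ≤ B ^ 2 * (R * evR (dil σ φ) x + R ^ (p₀ - 2) * evR (dil σ φ) x ^ 2) := by
          have hBp : B ^ p ≤ B ^ 2 := by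
            rw [← Real.rpow_natCast B 2]
            exact Real.rpow_le_rpow_of_exponent_le hB1 (by push_cast; linarith)
          have := rpow_le_interp (hΦ0 x) hR1 hp hpp hp₀.le
          have h3 : 0 ≤ evR (dil σ φ) x ^ p := Real.rpow_nonneg (hΦ0 x) _
          gcongr
      _ = _ := by ring
  have hc1 := evR_continuous (dil σ φ)
  have hc2 := evR_continuous (dil σ (φ * φ))
  have hc3 := evR_continuous (a * dil σ φ * cosp n)
  calc ∫ x in (0:ℝ)..1, |evR (a * dil σ φ * cosp n) x| ^ p
      ≤ ∫ x in (0:ℝ)..1, (B ^ 2 * R * evR (dil σ φ) x +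
          B ^ 2 * R ^ (p₀ - 2) * evR (dil σ (φ * φ)) x) := by
        refine intervalIntegral.integral_mono_on zero_le_one ?_ ?_ fun x _ => hpt2 x
        · exact (hc3.abs.rpow_const fun x => Or.inr (by linarith)).intervalIntegrable _ _
        · exact Continuous.intervalIntegrable (by fun_prop) _ _
    _ = B ^ 2 * R * (φ.coeff 0).re + B ^ 2 * R ^ (p₀ - 2) := by
        rw [intervalIntegral.integral_add (Continuous.intervalIntegrable (by fun_prop) _ _)
          (Continuous.intervalIntegrable (by fun_prop) _ _), intervalIntegral.integral_const_mul,
          intervalIntegral.integral_const_mul, integral_evR, integral_evR, hσ1, hσ2]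
        simp
    _ ≤ B ^ 2 * R * (ε / (2 * B ^ 2 * R)) + B ^ 2 * (ε / (2 * B ^ 2)) := by gcongr
    _ = ε := by field_simp; norm_num

/-- The convex-integration step: an increment in a single dyadic shell whose square cancels the
mean-free part of `e` up to a small error, whose interactions with finitely many given functions
are small, and which carries a fixed amount of `L²` mass while being small in `L^p`, `p ≤ p₀ < 2`,
and in `Ḃ^α_{∞,∞}`. It is `d = a(x) φ(σx) 2cos(2π·3·2^j x)`, with `σ` chosen after `φ`, and `j` after
`σ`. The restriction `s > 2` is what makes the linear term `d''` small. -/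
lemma exists_increment {s : ℝ} (hs : 2 < s) {e : Trig} (he : IsReal e) (V : List Trig)
    {ε α p₀ : ℝ} (hε : 0 < ε) (hα : α < 0) (hp₀ : p₀ < 2) :
    ∃ (d : Trig) (j : ℕ), IsReal d ∧ InShell j d ∧ wnorm (wt s) (3 * (d * d) + e) < ε ∧
      (∀ v ∈ V, wnorm (wt s) (v * d) < ε) ∧ wnorm (wt s) (dd d) < ε ∧
      (∀ x, (2 : ℝ) ^ ((j : ℝ) * α) * ‖ev x d‖ ≤ ε) ∧
      (∀ p, 1 ≤ p → p ≤ p₀ → ∫ x in (0:ℝ)..1, |evR d x| ^ p ≤ ε) ∧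
      1 ≤ ((d * d).coeff 0).re := by
  have hs0 : 0 < s := by linarith
  obtain ⟨a, ha, ha1, ha2⟩ := exists_amplitude s he (δ := ε / 4) (by positivity)
  obtain ⟨φ, hφ, hφ2, hφp⟩ := exists_profile ha hε hp₀
  obtain ⟨σ, hσ⟩ := ((((wnorm_dil_tendsto hs0 (a * a) (φ * φ)).eventually_lt_const
    (show 0 < ε / 24 by positivity)).and (coeff_zero_dil (a * a) (φ * φ))).and
    ((coeff_zero_dil 1 φ).and (coeff_zero_dil 1 (φ * φ)))).exists
  obtain ⟨⟨hσ1, hσ2⟩, hσ3, hσ4⟩ := hσ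
  rw [hφ2] at hσ1
  rw [hφ2, mul_one] at hσ2
  have h11 : (1 : Trig).coeff 0 = 1 := by simp
  rw [h11, one_mul, one_mul] at hσ3 hσ4
  rw [hφ2] at hσ4
  have hLp := hφp σ hσ3 hσ4
  set g : Trig := a * dil σ φ with hg
  have hgr : IsReal g := ha.mul (hφ.dil σ)
  have hgg : g * g = a * a * dil σ (φ * φ) := by rw [hg, map_mul]; ring
  -- The carrier frequencies `3·2^j` and their doubles leave every finite set.
  have hinj1 : Function.Injective (fun j : ℕ => (3 * 2 ^ j : ℤ)) := fun i j h => by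
    have h' : (2 : ℤ) ^ i = 2 ^ j := by simpa using h
    exact Int.pow_right_injective (by norm_num) h'
  have hinj2 : Function.Injective (fun j : ℕ => (2 * (3 * 2 ^ j) : ℤ)) := fun i j h =>
    hinj1 (by simpa using h)
  have hT1 := hinj1.tendsto_cofinite
  have hT2 := hinj2.tendsto_cofinite
  rw [Nat.cofinite_eq_atTop] at hT1 hT2
  have E1 := (((wnorm_cosp_tendsto hs0 (g * g)).comp hT2).eventually_lt_const
    (show 0 < ε / 12 by positivity))
  have E2 := hT2.eventually (coeff_zero_cosp (g * g))
  have E3 : ∀ᶠ j : ℕ in atTop, ∀ v ∈ {v | v ∈ V}, wnorm (wt s) (v * (g * cosp (3 * 2 ^ j))) < ε := by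
    rw [Filter.eventually_all_finite V.finite_toSet]
    intro v _
    have := (((wnorm_cosp_tendsto hs0 (v * g)).comp hT1).eventually_lt_const hε)
    simpa only [Function.comp_def, mul_assoc] using this
  have E4 := (((wnorm_cosp_tendsto (t := s - 2) (by linarith) g).comp hT1).eventually_lt_const
    (show 0 < ε / (2 * Real.pi) ^ 2 by have := Real.pi_pos; positivity))
  have E5 : ∀ᶠ j : ℕ in atTop,
      (2 : ℝ) ^ (((j + 1 : ℕ) : ℝ) * α) * (wiener a * wiener φ * 2) ≤ ε := by
    have h1 : Tendsto (fun j : ℕ => (2 : ℝ) ^ (((j + 1 : ℕ) : ℝ) * α)) atTop (𝓝 0) := by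
      have h2 : Tendsto (fun j : ℕ => ((2 : ℝ) ^ α) ^ (j + 1)) atTop (𝓝 0) :=
        (tendsto_pow_atTop_nhds_zero_of_lt_one (by positivity)
          (Real.rpow_lt_one_of_one_lt_of_neg (by norm_num) hα)).comp (tendsto_add_atTop_nat 1)
      refine h2.congr fun j => ?_
      rw [← Real.rpow_natCast, ← Real.rpow_mul (by norm_num), mul_comm]
    have h2 := h1.mul_const (wiener a * wiener φ * 2)
    rw [zero_mul] at h2
    exact h2.eventually_le_const hε
  obtain ⟨j, hj1, hj2, hj3, hj4, hj5, hj6⟩ :=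
    (E1.and (E2.and (E3.and (E4.and (E5.and (eventually_inShell g)))))).exists
  simp only [Function.comp_def] at hj1 hj4
  set c : Trig := cosp (3 * 2 ^ j) with hc
  -- `(2cos θ)² = 2 + 2cos 2θ`, so `3d² = 6g²` up to a high-frequency term.
  have hdd : g * c * (g * c) = g * g * cosp (2 * (3 * 2 ^ j)) + 2 * (g * g) := by
    have := cosp_mul_self (3 * 2 ^ j)
    linear_combination g * g * this
  refine ⟨g * c, j + 1, hgr.mul (isReal_cosp _), hj6, ?_, hj3, ?_, ?_, fun p => hLp _ p, ?_⟩
  · have h1 : 3 * (g * c * (g * c)) + e = C 3 * (g * g * cosp (2 * (3 * 2 ^ j))) +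
        C 6 * (a * a * (dil σ (φ * φ) - .single 0 1)) + (6 * (a * a) + e) := by
      have h2 : (AddMonoidAlgebra.single 0 1 : Trig) = 1 := rfl
      have h3 : (C 3 : Trig) = 3 := map_ofNat _ 3
      have h6 : (C 6 : Trig) = 6 := map_ofNat _ 6
      rw [h2, h3, h6]
      linear_combination 3 * hdd + 6 * hgg
    rw [h1]
    have h2 := wnorm_add_le (wt_nonneg s) (C 3 * (g * g * cosp (2 * (3 * 2 ^ j))) +
        C 6 * (a * a * (dil σ (φ * φ) - .single 0 1))) (6 * (a * a) + e)
    have h3 := wnorm_add_le (wt_nonneg s) (C 3 * (g * g * cosp (2 * (3 * 2 ^ j))))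
        (C 6 * (a * a * (dil σ (φ * φ) - .single 0 1)))
    rw [wnorm_C_mul, wnorm_C_mul] at h3
    have h4 : ‖(3 : ℂ)‖ = 3 := by simp
    have h5 : ‖(6 : ℂ)‖ = 6 := by simp
    rw [h4, h5] at h3
    linarith
  · refine (wnorm_dd_le s _).trans_lt ?_
    rw [lt_div_iff₀ (by have := Real.pi_pos; positivity)] at hj4
    linarith
  · intro x
    refine le_trans (mul_le_mul_of_nonneg_left ?_ (by positivity)) hj5
    rw [map_mul, hg, map_mul, norm_mul, norm_mul, ev_dil]
    have h2 : ‖ev x c‖ ≤ 2 := by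
      rw [hc, ev_cosp, Complex.norm_real, Real.norm_eq_abs, abs_mul, abs_two]
      linarith [Real.abs_cos_le_one (2 * Real.pi * (3 * 2 ^ j : ℤ) * x)]
    have hw0 : 0 ≤ wiener a := wnorm_nonneg (fun _ => zero_le_one) a
    have hw1 : 0 ≤ wiener φ := wnorm_nonneg (fun _ => zero_le_one) φ
    have := norm_ev_le a x
    have := norm_ev_le φ (σ * x)
    gcongr
  · have h2 : (2 : Trig) = C 2 := (map_ofNat _ 2).symm
    rw [hdd, AddMonoidAlgebra.coeff_add, Finsupp.add_apply, hj2, h2, coeff_C_mul, hgg, hσ2, zero_add]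
    simp only [Complex.mul_re, Complex.re_ofNat, Complex.im_ofNat, zero_mul, sub_zero]
    linarith

end Trig

namespace Trig

open LaurentPolynomial (C)

/-! ### The iteration -/

lemma IsReal.sub {f g : Trig} (hf : IsReal f) (hg : IsReal g) : IsReal (f - g) := fun x => by
  rw [map_sub, ← hf x, ← hg x]; simp [evR]

lemma ev_three (x : ℝ) : ev x 3 = 3 := map_ofNat (ev x) 3

lemma isReal_three : IsReal 3 := fun x => by simp [evR, ev_three]

lemma isReal_zero : IsReal 0 := fun x => by simp [evR]

/-- The primitive `3u² - u''` of the left-hand side of the equation. -/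
noncomputable def err (u : Trig) : Trig := 3 * (u * u) - dd u

lemma IsReal.err {u : Trig} (hu : IsReal u) : IsReal (err u) :=
  (isReal_three.mul (hu.mul hu)).sub hu.dd

lemma err_zero : err 0 = 0 := by
  have : dd 0 = 0 := by ext; simp
  simp [err, this]

lemma err_add (u d : Trig) :
    err (u + d) = 3 * (d * d) + err u + (C 6 * (u * d) - dd d) := by
  have : (C 6 : Trig) = 6 := map_ofNat (C : ℂ →+* Trig) 6
  rw [err, err, dd_add, this]; ring

lemma wnorm_err_add_lt {s ε : ℝ} {u d : Trig} (h1 : wnorm (wt s) (3 * (d * d) + err u) < ε)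
    (h2 : wnorm (wt s) (u * d) < ε) (h3 : wnorm (wt s) (dd d) < ε) :
    wnorm (wt s) (err (u + d)) < 8 * ε := by
  rw [err_add]
  have h4 := wnorm_add_le (wt_nonneg s) (3 * (d * d) + err u) (C 6 * (u * d) - dd d)
  have h5 := wnorm_sub_le (wt_nonneg s) (C 6 * (u * d)) (dd d)
  rw [wnorm_C_mul] at h5
  norm_num at h5
  linarith

/-- The size of the errors allowed at step `n`. The factor `8 = 1 + 6 + 1` counts the terms of
`err_add`, and the rate `4^{-n}` leaves room for a square root in the `L^p` bounds and for
summing over pairs of increments. -/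
noncomputable def eps (n : ℕ) : ℝ := (1 / 4) ^ n / 8

lemma eps_pos (n : ℕ) : 0 < eps n := by unfold eps; positivity

lemma eps_le_pow (n : ℕ) : eps n ≤ (1 / 4) ^ n := by
  have : (0 : ℝ) < (1 / 4) ^ n := by positivity
  unfold eps; linarith

lemma pow_le_pow_half (n : ℕ) : (1 / 4 : ℝ) ^ n ≤ (1 / 2) ^ n := by gcongr; norm_num

/-- `d` is an admissible increment, living in the `j`-th shell, at step `n` of the iteration,
when the current approximation is `u` and the previous increments lie in `l`. The exponents
`-1/(n+1)` and `2 - 1/(n+1)` eventually pass every fixed `α < 0` and `p < 2`. -/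
structure IsStep (s : ℝ) (n : ℕ) (u : Trig) (l : List Trig) (d : Trig) (j : ℕ) : Prop where
  real : IsReal d
  shell : InShell j d
  err_lt : wnorm (wt s) (3 * (d * d) + err u) < eps n
  mul_u_lt : wnorm (wt s) (u * d) < eps n
  mul_lt : ∀ v ∈ l, wnorm (wt s) (v * d) < eps n
  dd_lt : wnorm (wt s) (dd d) < eps n
  besov : ∀ x, (2 : ℝ) ^ ((j : ℝ) * (-1 / ((n : ℝ) + 1))) * ‖ev x d‖ ≤ eps n
  lp : ∀ p : ℝ, 1 ≤ p → p ≤ 2 - 1 / ((n : ℝ) + 1) → ∫ x in (0:ℝ)..1, |evR d x| ^ p ≤ eps n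
  mass : 1 ≤ ((d * d).coeff 0).re

lemma exists_isStep {s : ℝ} (hs : 2 < s) (n : ℕ) {u : Trig} (hu : IsReal u) (l : List Trig) :
    ∃ d j, IsStep s n u l d j := by
  have hn : (0 : ℝ) < (n : ℝ) + 1 := by positivity
  obtain ⟨d, j, h1, h2, h3, h4, h5, h6, h7, h8⟩ := exists_increment hs hu.err (u :: l)
    (eps_pos n) (α := -1 / ((n : ℝ) + 1)) (p₀ := 2 - 1 / ((n : ℝ) + 1))
    (div_neg_of_neg_of_pos (by norm_num) hn) (by have : 0 < 1 / ((n : ℝ) + 1) := by positivity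
                                                 linarith)
  exact ⟨d, j, h1, h2, h3, h4 u (by simp), fun v hv => h4 v (by simp [hv]), h5, h6, h7, h8⟩

/-- Recursive choice of the increments; the list `l n` records the increments before step `n`. -/
lemma exists_sequence {s : ℝ} (hs : 2 < s) : ∃ (d : ℕ → Trig) (j : ℕ → ℕ) (l : ℕ → List Trig),
    (∀ n, IsStep s n (∑ i ∈ Finset.range n, d i) (l n) (d n) (j n)) ∧
      ∀ m n, m < n → d m ∈ l n := by
  have h : ∀ l : List Trig, ∃ d j, IsReal l.sum → IsStep s l.length l.sum l d j := by
    intro l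
    by_cases hl : IsReal l.sum
    · obtain ⟨d, j, h⟩ := exists_isStep hs l.length hl l
      exact ⟨d, j, fun _ => h⟩
    · exact ⟨0, 0, fun h => absurd h hl⟩
  choose f g hfg using h
  let L : ℕ → List Trig := fun n => Nat.rec [] (fun _ l => f l :: l) n
  have hL : ∀ n, L (n + 1) = f (L n) :: L n := fun n => rfl
  have hlen : ∀ n, (L n).length = n := by
    intro n
    induction n with
    | zero => rfl
    | succ n ih => rw [hL, List.length_cons, ih]
  have hsum : ∀ n, (L n).sum = ∑ i ∈ Finset.range n, f (L i) := by
    intro n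
    induction n with
    | zero => rfl
    | succ n ih => rw [hL, List.sum_cons, ih, Finset.sum_range_succ, add_comm]
  have hreal : ∀ n, IsReal (L n).sum := by
    intro n
    induction n with
    | zero => exact isReal_zero
    | succ n ih => rw [hL, List.sum_cons]; exact (hfg _ ih).real.add ih
  refine ⟨fun n => f (L n), fun n => g (L n), L, fun n => ?_, fun m n hmn => ?_⟩
  · have := hfg _ (hreal n)
    rwa [hlen, hsum] at this
  · induction n with
    | zero => omega
    | succ n ih =>
      rw [hL]
      rcases Nat.lt_succ_iff_lt_or_eq.1 hmn with h | rfl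
      · exact List.mem_cons_of_mem _ (ih h)
      · exact List.mem_cons_self

/-! ### The equation and the Besov and Lebesgue bounds -/

lemma InShell.coeff_zero {j : ℕ} {d : Trig} (h : InShell j d) : d.coeff 0 = 0 := by
  by_contra h0
  have h1 := (h 0 h0).1
  have h2 : (0 : ℝ) < 2 ^ j := by positivity
  simp at h1
  linarith

/-- The equation, after integrating once: `E` and `3u² - u''` differ by a constant. -/
lemma deriv_err {u : Trig} (hu : IsReal u) (κ x : ℝ) :
    3 * deriv (fun y => evR u y ^ 2) x - iteratedDeriv 3 (evR u) x =
      deriv (evR (err u + C (κ : ℂ))) x := by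
  have h1 : evR (err u + C (κ : ℂ)) =
      fun y => 3 * evR u y ^ 2 - iteratedDeriv 2 (evR u) y + κ := by
    ext y
    have h3 : evR 3 y = 3 := by simp [evR, ev_three]
    have h4 : evR (err u) y = evR (3 * (u * u)) y - evR (dd u) y := by simp [evR, err]
    rw [evR_add, evR_const, h4, evR_mul isReal_three (hu.mul hu), evR_mul hu hu, evR_deriv2, h3,
      sq]
  have h2 : Differentiable ℝ (evR u) := (evR_contDiff u).differentiable (by simp)
  have h3 : Differentiable ℝ (iteratedDeriv 2 (evR u)) := by
    rw [evR_deriv2]; exact (evR_contDiff _).differentiable (by simp)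
  have h4 : Differentiable ℝ (fun y => evR u y ^ 2) := h2.pow 2
  rw [h1, iteratedDeriv_succ, deriv_add_const, deriv_fun_sub ((h4 x).const_mul 3) (h3 x),
    deriv_const_mul 3 (h4 x)]

variable {s : ℝ} {n : ℕ} {u : Trig} {l : List Trig} {d : Trig} {j : ℕ}

lemma IsStep.integral_sq (h : IsStep s n u l d j) : 1 ≤ ∫ x in (0:ℝ)..1, evR d x ^ 2 := by
  have : (fun x => evR d x ^ 2) = evR (d * d) := by
    ext x; rw [evR_mul h.real h.real, sq]
  rw [this, integral_evR]
  exact h.mass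

lemma IsStep.besov_le (h : IsStep s n u l d j) {φ : ℝ → ℝ}
    (hone : ∀ ξ : ℝ, 1 ≤ |ξ| → |ξ| ≤ 12/7 → φ ξ = 1)
    (hrange : ∀ ξ : ℝ, φ ξ ∈ Set.Icc (0:ℝ) 1)
    (hsum : ∀ ξ : ℝ, 1 ≤ |ξ| → HasSum (fun j : ℕ => φ (ξ / 2 ^ j)) 1)
    {α : ℝ} (hα : α ≤ -1 / ((n : ℝ) + 1)) :
    (⨆ i : ℕ, (2:ℝ) ^ ((i : ℝ) * α) * ⨆ x : ℝ, ‖lpShell φ (fun y => ev y d) i x‖) ≤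
      (1 / 2) ^ n := by
  have h0 : (0 : ℝ) ≤ (1 / 2) ^ n := by positivity
  refine Real.iSup_le (fun i => ?_) h0
  by_cases hi : i = j
  · subst hi
    simp only [lpShell_self hone h.shell]
    rw [Real.mul_iSup_of_nonneg (by positivity)]
    refine Real.iSup_le (fun x => ?_) h0
    calc (2:ℝ) ^ ((i : ℝ) * α) * ‖ev x d‖
        ≤ (2 : ℝ) ^ ((i : ℝ) * (-1 / ((n : ℝ) + 1))) * ‖ev x d‖ := by
          gcongr
          norm_num
      _ ≤ eps n := h.besov x
      _ ≤ (1 / 2) ^ n := (eps_le_pow n).trans (pow_le_pow_half n)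
  · simp only [lpShell_other hone hrange hsum hi h.shell]
    simp

lemma IsStep.lp_le (h : IsStep s n u l d j) {p : ℝ} (hp : 1 ≤ p)
    (hp2 : p ≤ 2 - 1 / ((n : ℝ) + 1)) :
    (∫ x in (0:ℝ)..1, |evR d x| ^ p) ^ (1 / p) ≤ (1 / 2) ^ n := by
  have h0 : 0 ≤ ∫ x in (0:ℝ)..1, |evR d x| ^ p :=
    intervalIntegral.integral_nonneg zero_le_one fun x _ => by positivity
  have hn : 0 < 1 / ((n : ℝ) + 1) := by positivity
  have hp1 : 1 / 2 ≤ 1 / p := one_div_le_one_div_of_le (by linarith) (by linarith)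
  calc (∫ x in (0:ℝ)..1, |evR d x| ^ p) ^ (1 / p)
      ≤ ((1 / 4) ^ n) ^ (1 / p) :=
        Real.rpow_le_rpow h0 ((h.lp p hp hp2).trans (eps_le_pow n)) (by positivity)
    _ ≤ ((1 / 4) ^ n) ^ (1 / 2 : ℝ) :=
        Real.rpow_le_rpow_of_exponent_ge (by positivity)
          (pow_le_one₀ (by norm_num) (by norm_num)) hp1
    _ = (1 / 2) ^ n := by
        rw [← Real.sqrt_eq_rpow]
        refine (Real.sqrt_eq_iff_mul_self_eq (by positivity) (by positivity)).2 ?_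
        rw [← mul_pow]; norm_num

/-- A sequence that is eventually `O(2^{-q})` is bounded by a multiple of `2^{-q}`. -/
lemma exists_uniform_bound {f : ℕ → ℝ} {A : ℝ} (hf : ∀ᶠ q in atTop, f q ≤ A * (1 / 2) ^ q) :
    ∃ K : ℝ, 0 < K ∧ ∀ q, f q ≤ K * (1 / 2) ^ q := by
  obtain ⟨N, hN⟩ := eventually_atTop.1 hf
  have h1 : ∀ q, 0 ≤ |f q| * 2 ^ q := fun q => by positivity
  refine ⟨|A| + 1 + ∑ q ∈ Finset.range N, |f q| * 2 ^ q,
    add_pos_of_pos_of_nonneg (by positivity) (Finset.sum_nonneg fun q _ => h1 q), fun q => ?_⟩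
  have h2 : 0 ≤ ∑ q ∈ Finset.range N, |f q| * 2 ^ q := Finset.sum_nonneg fun q _ => h1 q
  have h3 : (0 : ℝ) < (1 / 2) ^ q := by positivity
  by_cases hq : q < N
  · have h4 : |f q| * 2 ^ q ≤ ∑ q ∈ Finset.range N, |f q| * 2 ^ q :=
      Finset.single_le_sum (f := fun q => |f q| * 2 ^ q) (fun q _ => h1 q)
        (Finset.mem_range.2 hq)
    have h5 : |f q| * 2 ^ q * (1 / 2) ^ q = |f q| := by
      rw [mul_assoc, ← mul_pow]; norm_num
    calc f q ≤ |f q| := le_abs_self _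
      _ = |f q| * 2 ^ q * (1 / 2) ^ q := h5.symm
      _ ≤ _ := by
        gcongr
        linarith [abs_nonneg A]
  · refine (hN q (not_lt.1 hq)).trans ?_
    gcongr
    linarith [le_abs_self A]

lemma eventually_threshold {δ : ℝ} (hδ : 0 < δ) : ∀ᶠ n : ℕ in atTop, 1 / ((n : ℝ) + 1) ≤ δ :=
  (tendsto_one_div_add_atTop_nhds_zero_nat).eventually_le_const hδ

end Trig

/-- **The inductive (convex-integration) proposition for stationary KdV.**
For `s > 5/2` there are sequences of smooth 1-periodic `u_q, E_q` such that:
(1) `u_q` has zero mean, `E_q ≢ 0` and `3(u_q²)' - u_q''' = E_q'`;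
(2) `‖E_q‖_{Ḣ^{-s}} < 2^{-q}`;
(3) for all `α < 0`, `1 ≤ p < 2`:
    `‖u_q - u_{q-1}‖_{Ḃ^α_{∞,∞}} + ‖u_q - u_{q-1}‖_{L^p} ≤ K(α,p)·2^{-C(α,p)q}`;
(4) `‖u_q - u_{q-1}‖_{L²} ≥ c > 0` uniformly in `q`;
(5) each increment is exactly one Littlewood–Paley shell;
(6) the diagonal and off-diagonal products of increments are summable in `Ḣ^{-s}`. -/
theorem stationary_kdv_inductive_proposition
    (s : ℝ) (hs : 5/2 < s)
    (φLP : ℝ → ℝ) (hφLP_smooth : ContDiff ℝ (⊤ : ℕ∞) φLP)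
    (hφLP_range : ∀ ξ : ℝ, φLP ξ ∈ Set.Icc (0:ℝ) 1)
    (hφLP_supp : Function.support φLP ⊆ {ξ : ℝ | 6/7 ≤ |ξ| ∧ |ξ| ≤ 2})
    (hφLP_one : ∀ ξ : ℝ, 1 ≤ |ξ| → |ξ| ≤ 12/7 → φLP ξ = 1)
    (hφLP_sum : ∀ ξ : ℝ, 1 ≤ |ξ| → HasSum (fun j : ℕ => φLP (ξ / 2 ^ j)) 1)
    (hφLP_disj : ∀ j j' : ℕ, 2 ≤ |(j : ℤ) - (j' : ℤ)| →
      Function.support (fun ξ : ℝ => φLP (ξ / 2 ^ j)) ∩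
        Function.support (fun ξ : ℝ => φLP (ξ / 2 ^ j')) = ∅) :
    ∃ u E : ℕ → ℝ → ℝ,
      (∀ q : ℕ,
        ContDiff ℝ (⊤ : ℕ∞) (u q) ∧ Function.Periodic (u q) 1 ∧
        ContDiff ℝ (⊤ : ℕ∞) (E q) ∧ Function.Periodic (E q) 1 ∧
        (∫ x in (0:ℝ)..1, u q x) = 0 ∧ (∃ x : ℝ, E q x ≠ 0) ∧
        (∀ x : ℝ, 3 * deriv (fun y => (u q y) ^ 2) x - iteratedDeriv 3 (u q) x
            = deriv (E q) x)) ∧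
      (∀ q : ℕ, negSobolevNorm s (E q) < (2:ℝ) ^ (-(q : ℤ))) ∧
      (∀ α : ℝ, α < 0 → ∀ p : ℝ, 1 ≤ p → p < 2 →
        ∃ C K : ℝ, 0 < C ∧ 0 < K ∧ ∀ q : ℕ,
          (⨆ j : ℕ, (2:ℝ) ^ ((j : ℝ) * α) *
              ⨆ x : ℝ, ‖lpShell φLP (fun y => ((incr u q y : ℝ) : ℂ)) j x‖)
            + (∫ x in (0:ℝ)..1, |incr u q x| ^ p) ^ (1/p)
            ≤ K * (2:ℝ) ^ (-(C * (q : ℝ)))) ∧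
      (∃ c : ℝ, 0 < c ∧ ∀ q : ℕ,
        c ≤ Real.sqrt (∫ x in (0:ℝ)..1, (incr u q x) ^ 2)) ∧
      (∀ q : ℕ, ∃! j : ℕ, ∀ x : ℝ,
        lpShell φLP (fun y => ((incr u q y : ℝ) : ℂ)) j x = ((incr u q x : ℝ) : ℂ)) ∧
      (Summable (fun nm : ℕ × ℕ => if nm.1 = nm.2 then 0 else
          negSobolevNorm s (fun x => incr u nm.1 x * incr u nm.2 x)) ∧
        Summable (fun n : ℕ => negSobolevNorm s (fun x => (incr u n x) ^ 2))) := by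
  obtain ⟨d, jj, l, hstep, hmem⟩ := Trig.exists_sequence (s := s) (by linarith)
  set U : ℕ → Trig := fun n => ∑ i ∈ Finset.range n, d i with hU
  have hUs : ∀ n, U (n + 1) = U n + d n := fun n => Finset.sum_range_succ _ _
  have hdr : ∀ n, Trig.IsReal (d n) := fun n => (hstep n).real
  have hUr : ∀ n, Trig.IsReal (U n) := by
    intro n
    induction n with
    | zero => exact Trig.isReal_zero
    | succ n ih => rw [hUs]; exact ih.add (hdr n)
  have herr : ∀ n, Trig.wnorm (Trig.wt s) (Trig.err (U (n + 1))) < (1 / 4) ^ n := by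
    intro n
    have := Trig.wnorm_err_add_lt (hstep n).err_lt (hstep n).mul_u_lt (hstep n).dd_lt
    rw [hUs]
    refine this.trans_le (le_of_eq ?_)
    unfold Trig.eps
    ring
  -- The additive constant makes `E q 0 = 1`; it is invisible to the homogeneous norm.
  let κ : ℕ → ℝ := fun q => 1 - Trig.evR (Trig.err (U (q + 1))) 0
  let Et : ℕ → Trig := fun q => Trig.err (U (q + 1)) + LaurentPolynomial.C (κ q : ℂ)
  have hEr : ∀ q, Trig.IsReal (Et q) := fun q => (hUr _).err.add (Trig.isReal_const _)
  have hincr : ∀ q, incr (fun q => Trig.evR (U (q + 1))) q = Trig.evR (d q) := by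
    intro q
    ext x
    cases q with
    | zero =>
      have : U (0 + 1) = d 0 := by simp [hU]
      simp [incr, this]
    | succ q =>
      have h1 : incr (fun q => Trig.evR (U (q + 1))) (q + 1) x =
          Trig.evR (U (q + 1 + 1)) x - Trig.evR (U (q + 1)) x := by simp [incr]
      rw [h1, hUs (q + 1), Trig.evR_add]; ring
  have hcomplex : ∀ q, (fun y => ((Trig.evR (d q) y : ℝ) : ℂ)) = fun y => Trig.ev y (d q) :=
    fun q => funext (hdr q)
  have hpow : ∀ q : ℕ, (2 : ℝ) ^ (-(q : ℤ)) = (1 / 2) ^ q := fun q => by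
    rw [zpow_neg, zpow_natCast, one_div, inv_pow]
  refine ⟨fun q => Trig.evR (U (q + 1)), fun q => Trig.evR (Et q), fun q => ?_, fun q => ?_,
    fun α hα p hp hp2 => ?_, ⟨1, one_pos, fun q => ?_⟩, fun q => ?_, ?_, ?_⟩
  · refine ⟨Trig.evR_contDiff _, Trig.evR_periodic _, Trig.evR_contDiff _, Trig.evR_periodic _,
      ?_, ⟨0, ?_⟩, fun x => Trig.deriv_err (hUr _) _ x⟩
    · rw [Trig.integral_evR]
      have : ∀ n, (U n).coeff 0 = 0 := by
        intro n
        induction n with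
        | zero => simp [hU]
        | succ n ih =>
          rw [hUs, AddMonoidAlgebra.coeff_add, Finsupp.add_apply, ih, (hstep n).shell.coeff_zero,
            add_zero]
      rw [this, Complex.zero_re]
    · have : Trig.evR (Et q) 0 = 1 := by
        rw [Trig.evR_add, Trig.evR_const]; ring
      exact this.trans_ne one_ne_zero
  · rw [hpow]
    refine (Trig.negSobolevNorm_le s (hEr q)).trans_lt ?_
    have h1 := Trig.wnorm_add_le (Trig.wt_nonneg s) (Trig.err (U (q + 1)))
      (LaurentPolynomial.C (κ q : ℂ))
    rw [Trig.wnorm_wt_C, add_zero] at h1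
    exact h1.trans_lt ((herr q).trans_le (Trig.pow_le_pow_half q))
  · have hev : ∀ᶠ q : ℕ in Filter.atTop,
        (⨆ j : ℕ, (2:ℝ) ^ ((j : ℝ) * α) * ⨆ x : ℝ, ‖lpShell φLP
          (fun y => ((incr (fun q => Trig.evR (U (q + 1))) q y : ℝ) : ℂ)) j x‖)
          + (∫ x in (0:ℝ)..1, |incr (fun q => Trig.evR (U (q + 1))) q x| ^ p) ^ (1/p)
          ≤ 2 * (1 / 2) ^ q := by
      filter_upwards [Trig.eventually_threshold (neg_pos.2 hα),
        Trig.eventually_threshold (sub_pos.2 hp2)] with q h1 h2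
      rw [hincr, hcomplex]
      have h3 := (hstep q).besov_le hφLP_one hφLP_range hφLP_sum (α := α)
        (by rw [neg_div]; linarith)
      have h4 := (hstep q).lp_le hp (by linarith)
      linarith
    obtain ⟨K, hK, h⟩ := Trig.exists_uniform_bound hev
    refine ⟨1, K, one_pos, hK, fun q => (h q).trans (le_of_eq ?_)⟩
    rw [one_mul, Real.rpow_neg (by norm_num), Real.rpow_natCast, one_div, inv_pow]
  · rw [hincr]
    exact Real.one_le_sqrt.2 (hstep q).integral_sq
  · rw [hincr, hcomplex]
    refine ⟨jj q, fun x => ?_, fun j hj => ?_⟩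
    · rw [Trig.lpShell_self hφLP_one (hstep q).shell, hdr]
    · by_contra hne
      have h0 : ∀ x, Trig.evR (d q) x = 0 := fun x => by
        have := hj x
        rw [Trig.lpShell_other hφLP_one hφLP_range hφLP_sum hne (hstep q).shell] at this
        exact_mod_cast this.symm
      have := (hstep q).integral_sq
      simp only [h0] at this
      norm_num at this
  · have hgeo : Summable fun n : ℕ => (1 / 2 : ℝ) ^ n :=
      summable_geometric_of_lt_one (by norm_num) (by norm_num)
    have hpos : ∀ n : ℕ, (0 : ℝ) ≤ (1 / 2) ^ n := fun n => by positivity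
    have hlt : ∀ m n, m < n → Trig.wnorm (Trig.wt s) (d m * d n) ≤ (1 / 2) ^ m * (1 / 2) ^ n := by
      intro m n hmn
      calc Trig.wnorm (Trig.wt s) (d m * d n) ≤ Trig.eps n :=
            ((hstep n).mul_lt _ (hmem m n hmn)).le
        _ ≤ (1 / 4) ^ n := Trig.eps_le_pow n
        _ = (1 / 2) ^ n * (1 / 2) ^ n := by rw [← mul_pow]; norm_num
        _ ≤ (1 / 2) ^ m * (1 / 2) ^ n :=
            mul_le_mul_of_nonneg_right
              (pow_le_pow_of_le_one (by norm_num) (by norm_num) hmn.le) (hpos n)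
    refine Summable.of_nonneg_of_le (fun nm => ?_) (fun nm => ?_)
      (hgeo.mul_of_nonneg hgeo hpos hpos)
    · split_ifs
      · exact le_rfl
      · exact Real.sqrt_nonneg _
    · obtain ⟨n, m⟩ := nm
      by_cases h : n = m
      · simp only [h, if_true]
        exact mul_nonneg (hpos _) (hpos _)
      · simp only [h, if_false, hincr]
        have h1 : (fun x => Trig.evR (d n) x * Trig.evR (d m) x) = Trig.evR (d n * d m) :=
          funext fun x => (Trig.evR_mul (hdr n) (hdr m) x).symm
        rw [h1]
        refine (Trig.negSobolevNorm_le s ((hdr n).mul (hdr m))).trans ?_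
        rcases lt_or_gt_of_ne h with h | h
        · exact hlt n m h
        · rw [mul_comm (d n), mul_comm ((1 / 2 : ℝ) ^ n)]
          exact hlt m n h
  · have hgeo : Summable fun n : ℕ => (5 : ℝ) * (1 / 4) ^ n :=
      (summable_geometric_of_lt_one (by norm_num) (by norm_num)).mul_left 5
    refine Summable.of_nonneg_of_le (fun n => Real.sqrt_nonneg _) (fun n => ?_) hgeo
    have h1 : (fun x => incr (fun q => Trig.evR (U (q + 1))) n x ^ 2) = Trig.evR (d n * d n) := by
      ext x
      rw [hincr, Trig.evR_mul (hdr n) (hdr n), sq]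
    rw [h1]
    refine (Trig.negSobolevNorm_le s ((hdr n).mul (hdr n))).trans ?_
    -- `3 d²` is the new error minus the old one, up to a small remainder.
    have h2 : Trig.wnorm (Trig.wt s) (Trig.err (U n)) ≤ 4 * (1 / 4) ^ n := by
      cases n with
      | zero =>
        have : U 0 = 0 := by simp [hU]
        rw [this, Trig.err_zero, Trig.wnorm_zero]; norm_num
      | succ n =>
        refine (herr n).le.trans (le_of_eq ?_)
        rw [pow_succ]; ring
    have h3 := (hstep n).err_lt.le.trans (Trig.eps_le_pow n)
    have h4 := Trig.wnorm_sub_le (Trig.wt_nonneg s) (3 * (d n * d n) + Trig.err (U n))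
      (Trig.err (U n))
    have h5 : (3 : Trig) = LaurentPolynomial.C 3 :=
      (map_ofNat (LaurentPolynomial.C : ℂ →+* Trig) 3).symm
    have h6 : ‖(3 : ℂ)‖ = 3 := by norm_num
    have h7 := Trig.wnorm_nonneg (Trig.wt_nonneg s) (d n * d n)
    rw [add_sub_cancel_right, h5, Trig.wnorm_C_mul, h6, ← h5] at h4
    linarith
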